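/- arXiv:1402.1122 — 2 statements merged into one kernel-verified Lean document; each statement's English description precedes it below -/
import Mathlib

section
/- For all natural numbers k ≥ 1, J ≥ 1, and every complex number t, one has (1-t)^k · ∑_{j_1+⋯+j_k ≤ J, j_r ≥ 0} t^{j_1+⋯+j_k} = 1 - t^{J+1} · ∑_{l=0}^{k-1} C(J+l, l) (1-t)^l, where C denotes the binomial coefficient. -/
theorem aux_card (n J m : ℕ) (hm : m ≤ J) :
    (((Fintype.piFinset fun _ : Fin (n + 1) => Finset.range (J + 1)).filter
          (fun j => ∑ i, j i ≤ J)).filter (fun j => ∑ i, j i = m)).card = (m + n).choose n := by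
  have h := Finset.card_finsuppAntidiag_nat_eq_choose (s := (Finset.univ : Finset (Fin (n + 1)))) m
  have e : (n + 1 + m - 1) = m + n := by omega
  rw [Finset.card_univ, Fintype.card_fin, e, Nat.choose_symm_add] at h
  rw [← h]
  symm
  refine Finset.card_bij (fun f _ => (f : Fin (n + 1) → ℕ)) ?_ ?_ ?_
  · intro f hf
    rw [Finset.mem_finsuppAntidiag] at hf
    have hs : ∑ i, f i = m := hf.1
    simp only [Finset.mem_filter, Fintype.mem_piFinset, Finset.mem_range]
    refine ⟨⟨fun i => ?_, by omega⟩, hs⟩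
    have := Finset.single_le_sum (f := fun i => f i) (fun i _ => Nat.zero_le _) (Finset.mem_univ i)
    omega
  · intro f _ g _ hfg
    exact DFunLike.coe_injective hfg
  · intro b hb
    refine ⟨Finsupp.equivFunOnFinite.symm b, ?_, by simp⟩
    rw [Finset.mem_filter] at hb
    rw [Finset.mem_finsuppAntidiag]
    exact ⟨by simpa using hb.2, Finset.subset_univ _⟩

theorem aux_tel (n J : ℕ) (t : ℂ) :
    (1 - t) * ∑ m ∈ Finset.range (J + 1), ((m + (n + 1)).choose (n + 1) : ℂ) * t ^ m =
    ∑ m ∈ Finset.range (J + 1), ((m + n).choose n : ℂ) * t ^ m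
      - ((J + (n + 1)).choose (n + 1) : ℂ) * t ^ (J + 1) := by
  induction J with
  | zero => simp
  | succ J ih =>
    rw [Finset.sum_range_succ, mul_add, ih, Finset.sum_range_succ _ (J + 1)]
    have : ((J + 1 + (n + 1)).choose (n + 1) : ℂ)
        = ((J + 1 + n).choose n : ℂ) + ((J + (n + 1)).choose (n + 1) : ℂ) := by
      have h := Nat.choose_succ_succ (J + 1 + n) n
      have e : J + (n + 1) = J + 1 + n := by omega
      rw [e]
      exact_mod_cast h
    rw [this]
    ring

theorem aux_main (n J : ℕ) (t : ℂ) :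
    (1 - t) ^ (n + 1) * ∑ m ∈ Finset.range (J + 1), ((m + n).choose n : ℂ) * t ^ m =
    1 - t ^ (J + 1) * ∑ l ∈ Finset.range (n + 1), ((J + l).choose l : ℂ) * (1 - t) ^ l := by
  induction n with
  | zero =>
    have := mul_neg_geom_sum t (J + 1)
    simpa using this
  | succ n ih =>
    rw [pow_succ, mul_assoc, aux_tel, mul_sub, ih, Finset.sum_range_succ _ (n + 1)]
    ring

/-- For all natural numbers `k ≥ 1`, `J ≥ 1` and every complex `t`,
`(1-t)^k · ∑_{j₁+⋯+j_k ≤ J} t^{j₁+⋯+j_k} = 1 - t^{J+1} ∑_{l=0}^{k-1} C(J+l,l)(1-t)^l`. -/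
theorem stmt_0 (k J : ℕ) (hk : 1 ≤ k) (hJ : 1 ≤ J) (t : ℂ) :
    (1 - t) ^ k *
      ∑ j ∈ (Fintype.piFinset fun _ : Fin k => Finset.range (J + 1)).filter
          (fun j => ∑ i, j i ≤ J), t ^ (∑ i, j i) =
    1 - t ^ (J + 1) * ∑ l ∈ Finset.range k, ((J + l).choose l : ℂ) * (1 - t) ^ l := by
  obtain ⟨n, rfl⟩ : ∃ n, k = n + 1 := ⟨k - 1, by omega⟩
  rw [← aux_main]
  congr 1
  rw [← Finset.sum_fiberwise_of_maps_to (t := Finset.range (J + 1)) (g := fun j => ∑ i, j i)]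
  · refine Finset.sum_congr rfl fun m hm => ?_
    rw [Finset.mem_range] at hm
    rw [← aux_card n J m (by omega), ← nsmul_eq_mul]
    refine Finset.sum_eq_card_nsmul fun j hj => ?_
    rw [(Finset.mem_filter.mp hj).2]
  · intro j hj
    have := (Finset.mem_filter.mp hj).2
    rw [Finset.mem_range]
    omega
end

section
/- Let d ≥ 1, k ≥ 1 be integers, q a positive integer, a an integer coprime to q, and S_k(q,a) = ∑_{x_1=1}^q ⋯ ∑_{x_k=1}^q e(a(x_1⋯x_k)^d/q). Then |q^{-k} S_k(q,a)| ≤ C(d,k) · τ(q)^{k-1} q^{-1/d}, where τ(q) is the number of divisors of q and C(d,k) depends only on d and k. -/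
/-- `e(α) = exp(2πiα)`. -/
noncomputable def eTwoPi (x : ℝ) : ℂ := Complex.exp (2 * Real.pi * Complex.I * x)

/-- The complete Weyl sum `S_k(q,a) = ∑_{x₁,…,x_k=1}^{q} e(a(x₁⋯x_k)^d/q)`. -/
noncomputable def SWeyl (d k : ℕ) (q : ℕ) (a : ℤ) : ℂ :=
  ∑ x ∈ Fintype.piFinset fun _ : Fin k => Finset.Icc 1 q,
    eTwoPi ((a : ℝ) * (∏ i, (x i : ℝ)) ^ d / q)


namespace HLW

open Finset

/-- The sum of an additive character over `d`-th powers. -/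
noncomputable def PS {R : Type*} [CommRing R] [Fintype R] (d : ℕ) (ψ : AddChar R ℂ) : ℂ :=
  ∑ x : R, ψ (x ^ d)

lemma add_pow_sq_zero {R : Type*} [CommRing R] (x t : R) (ht : t * t = 0) (d : ℕ) :
    (x + t) ^ d = x ^ d + d * x ^ (d - 1) * t := by
  induction d with
  | zero => simp
  | succ d ih =>
    rw [pow_succ, ih]
    rcases d with _ | d
    · simp
    · simp only [Nat.add_sub_cancel]
      push_cast
      linear_combination ((d : R) + 1) * x ^ d * ht

/-- The unit part of the power sum vanishes. -/
lemma unit_sum_zero {R : Type*} [CommRing R] [Fintype R] [DecidableEq R] (d : ℕ)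
    (ψ : AddChar R ℂ) (hψ : ψ.IsPrimitive) (N : R) (hN : N * N = 0) (hdN : (d : R) * N ≠ 0)
    [DecidablePred (fun x : R => IsUnit x)] :
    ∑ x : R, (if IsUnit x then ψ (x ^ d) else 0) = 0 := by
  have key : ∀ y : R, ∑ x : R, (if IsUnit x then ψ (x ^ d) else 0) =
      ∑ x : R, (if IsUnit x then ψ (x ^ d) * ψ (y * (d * x ^ (d - 1) * N)) else 0) := by
    intro y
    rw [← Equiv.sum_comp (Equiv.addRight (N * y))]
    apply Finset.sum_congr rfl
    intro x _
    have hnil : IsNilpotent (N * y) := ⟨2, by rw [pow_two]; linear_combination y * y * hN⟩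
    have hu : IsUnit (x + N * y) ↔ IsUnit x := by
      constructor
      · intro h
        have := hnil.neg.isUnit_add_left_of_commute h (Commute.all _ _)
        simpa using this
      · intro h
        exact hnil.isUnit_add_left_of_commute h (Commute.all _ _)
    simp only [Equiv.coe_addRight, hu]
    split_ifs
    · rw [add_pow_sq_zero x (N * y) (by linear_combination y * y * hN), AddChar.map_add_eq_mul]
      congr 2
      ring
    · rfl
  have h2 : (Fintype.card R : ℂ) * ∑ x : R, (if IsUnit x then ψ (x ^ d) else 0) = 0 := by
    calc (Fintype.card R : ℂ) * ∑ x : R, (if IsUnit x then ψ (x ^ d) else 0)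
        = ∑ y : R, ∑ x : R, (if IsUnit x then ψ (x ^ d) else 0) := by
          simp only [Finset.sum_const, nsmul_eq_mul, Finset.card_univ]
      _ = ∑ y : R, ∑ x : R,
          (if IsUnit x then ψ (x ^ d) * ψ (y * (d * x ^ (d - 1) * N)) else 0) :=
          Finset.sum_congr rfl fun y _ => key y
      _ = ∑ x : R, ∑ y : R,
          (if IsUnit x then ψ (x ^ d) * ψ (y * (d * x ^ (d - 1) * N)) else 0) :=
          Finset.sum_comm
      _ = 0 := by
          apply Finset.sum_eq_zero
          intro x _
          split_ifs with hx
          · rw [← Finset.mul_sum, AddChar.sum_mulShift _ hψ, if_neg, Nat.cast_zero, mul_zero]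
            intro h0
            apply hdN
            have h1 : x ^ (d - 1) * (d * N) = 0 := by linear_combination h0
            exact ((hx.pow (d - 1)).mul_right_eq_zero).1 h1
          · simp
  rcases mul_eq_zero.1 h2 with h | h
  · exfalso
    have : Nonempty R := ⟨0⟩
    have := Fintype.card_pos (α := R)
    have h' : Fintype.card R = 0 := by exact_mod_cast h
    omega
  · exact h

lemma norm_PS_le {R : Type*} [CommRing R] [Fintype R] (d : ℕ) (ψ : AddChar R ℂ) :
    ‖PS d ψ‖ ≤ Fintype.card R := by
  unfold PS
  refine (norm_sum_le _ _).trans ?_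
  simp

/-- Periodic sums. -/
lemma sum_range_mul_zmod (n m : ℕ) [NeZero n] (g : ZMod n → ℂ) :
    ∑ z ∈ range (n * m), g (z : ZMod n) = m * ∑ z : ZMod n, g z := by
  have h1 : ∑ z ∈ range n, g (z : ZMod n) = ∑ z : ZMod n, g z := by
    refine Finset.sum_nbij' (fun z => (z : ZMod n)) (fun z => z.val) ?_ ?_ ?_ ?_ ?_
    · simp
    · intro a _; simpa using ZMod.val_lt a
    · intro a ha; exact ZMod.val_cast_of_lt (by simpa using ha)
    · intro a _; simp
    · simp
  induction m with
  | zero => simp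
  | succ m ih =>
    rw [Nat.mul_succ, Finset.sum_range_add, ih]
    simp only [Nat.cast_add, Nat.cast_mul, ZMod.natCast_self, zero_mul, zero_add, h1]
    push_cast; ring

/-- Product decomposition. -/
lemma PS_mul {a b : ℕ} [NeZero a] [NeZero b] [NeZero (a * b)] (hab : a.Coprime b) (d : ℕ)
    (ψ : AddChar (ZMod (a * b)) ℂ) (hψ : ψ.IsPrimitive) :
    ∃ (ψ₁ : AddChar (ZMod a) ℂ) (ψ₂ : AddChar (ZMod b) ℂ), ψ₁.IsPrimitive ∧ ψ₂.IsPrimitive ∧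
      PS d ψ = PS d ψ₁ * PS d ψ₂ := by
  let e := ZMod.chineseRemainder hab
  let ψ₁ : AddChar (ZMod a) ℂ := ψ.compAddMonoidHom
    (e.symm.toAddEquiv.toAddMonoidHom.comp (AddMonoidHom.inl _ _))
  let ψ₂ : AddChar (ZMod b) ℂ := ψ.compAddMonoidHom
    (e.symm.toAddEquiv.toAddMonoidHom.comp (AddMonoidHom.inr _ _))
  have h1 : ∀ x, ψ₁ x = ψ (e.symm (x, 0)) := fun x => rfl
  have h2 : ∀ x, ψ₂ x = ψ (e.symm (0, x)) := fun x => rfl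
  refine ⟨ψ₁, ψ₂, ?_, ?_, ?_⟩
  · apply AddChar.zmod_char_primitive_of_eq_one_only_at_zero
    intro x hx
    rw [h1, hψ.zmod_char_eq_one_iff, map_eq_zero_iff _ e.symm.injective] at hx
    exact congrArg Prod.fst hx
  · apply AddChar.zmod_char_primitive_of_eq_one_only_at_zero
    intro x hx
    rw [h2, hψ.zmod_char_eq_one_iff, map_eq_zero_iff _ e.symm.injective] at hx
    exact congrArg Prod.snd hx
  · unfold PS
    rw [← Equiv.sum_comp e.symm.toEquiv, Fintype.sum_prod_type, Finset.sum_mul_sum]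
    refine Finset.sum_congr rfl fun x _ => Finset.sum_congr rfl fun y _ => ?_
    rw [h1, h2, ← AddChar.map_add_eq_mul, ← map_add]
    congr 1
    change (e.symm (x, y)) ^ d = _
    rw [← map_pow]
    simp

/-- Non-unit part for prime powers. -/
lemma PS_prime_pow_eq (p l d : ℕ) (hp : p.Prime) (hl : 1 ≤ l) [NeZero (p ^ l)]
    (ψ : AddChar (ZMod (p ^ l)) ℂ) (hψ : ψ.IsPrimitive) (v : ℕ) (hv : ¬ p ^ (v + 1) ∣ d)
    (hvl : 2 * v + 2 ≤ l) :
    PS d ψ = ∑ z ∈ range (p ^ (l - 1)), ψ ((p : ZMod (p ^ l)) ^ d * (z : ZMod (p ^ l)) ^ d) := by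
  classical
  have hN := unit_sum_zero d ψ hψ ((p ^ (l - v - 1) : ℕ) : ZMod (p ^ l)) (by
      rw [← Nat.cast_mul, ZMod.natCast_eq_zero_iff, ← pow_add]
      exact pow_dvd_pow _ (by omega)) (by
      rw [← Nat.cast_mul, Ne, ZMod.natCast_eq_zero_iff]
      intro h
      apply hv
      have : p ^ l = p ^ (v + 1) * p ^ (l - v - 1) := by rw [← pow_add]; congr 1; omega
      rw [this] at h
      exact Nat.dvd_of_mul_dvd_mul_right (pow_pos hp.pos _) h)
  have hsplit : PS d ψ = ∑ x : ZMod (p ^ l), (if IsUnit x then 0 else ψ (x ^ d)) := by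
    have : PS d ψ = ∑ x : ZMod (p ^ l), (if IsUnit x then ψ (x ^ d) else 0) +
        ∑ x : ZMod (p ^ l), (if IsUnit x then 0 else ψ (x ^ d)) := by
      unfold PS
      rw [← Finset.sum_add_distrib]
      refine Finset.sum_congr rfl fun x _ => ?_
      split_ifs <;> simp
    rw [this, hN, zero_add]
  have h1 := sum_range_mul_zmod (p ^ l) 1 (fun x => (if IsUnit x then 0 else ψ (x ^ d)))
  rw [Nat.cast_one, one_mul, mul_one] at h1
  rw [hsplit, ← h1]
  have hu : ∀ x : ℕ, IsUnit (x : ZMod (p ^ l)) ↔ ¬ p ∣ x := by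
    intro x
    rw [ZMod.isUnit_iff_coprime, Nat.coprime_pow_right_iff (by omega), Nat.coprime_comm,
      hp.coprime_iff_not_dvd]
  simp only [hu, ite_not]
  rw [← Finset.sum_filter]
  have hpl : p ^ l = p * p ^ (l - 1) := by
    rw [← pow_succ']; congr 1; omega
  symm
  refine Finset.sum_nbij (fun z => p * z) ?_ ?_ ?_ ?_
  · intro z hz
    simp only [Finset.mem_range, Finset.mem_filter] at hz ⊢
    exact ⟨by rw [hpl]; exact Nat.mul_lt_mul_of_pos_left hz hp.pos, dvd_mul_right _ _⟩
  · intro x _ y _ hxy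
    exact Nat.eq_of_mul_eq_mul_left hp.pos hxy
  · intro x hx
    simp only [Finset.coe_filter, Finset.mem_range, Set.mem_ofPred_eq] at hx
    obtain ⟨hx, z, rfl⟩ := hx
    refine ⟨z, ?_, rfl⟩
    simp only [Finset.coe_range, Set.mem_Iio]
    rw [hpl] at hx
    exact Nat.lt_of_mul_lt_mul_left hx
  · intro z _
    push_cast
    rw [mul_pow]

lemma primitiveRoot_of_primitive {n : ℕ} [NeZero n] (ψ : AddChar (ZMod n) ℂ)
    (hψ : ψ.IsPrimitive) : IsPrimitiveRoot (ψ 1) n := by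
  have h : ∀ l : ℕ, ψ 1 ^ l = ψ (l : ZMod n) := by
    intro l
    rw [← AddChar.map_nsmul_eq_pow]; simp
  constructor
  · rw [h]; simp
  · intro l hl
    rw [h, hψ.zmod_char_eq_one_iff] at hl
    exact (ZMod.natCast_eq_zero_iff _ _).1 hl

/-- The recursion. -/
lemma PS_prime_pow_rec (p l d : ℕ) (hp : p.Prime) (hd : 1 ≤ d) (hdl : d < l) [NeZero (p ^ l)]
    [NeZero (p ^ (l - d))]
    (ψ : AddChar (ZMod (p ^ l)) ℂ) (hψ : ψ.IsPrimitive) (v : ℕ) (hv : ¬ p ^ (v + 1) ∣ d)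
    (hvl : 2 * v + 2 ≤ l) :
    ∃ ψ' : AddChar (ZMod (p ^ (l - d))) ℂ, ψ'.IsPrimitive ∧
      PS d ψ = (p ^ (d - 1) : ℕ) * PS d ψ' := by
  have hroot := primitiveRoot_of_primitive ψ hψ
  have hroot' : IsPrimitiveRoot (ψ 1 ^ (p ^ d)) (p ^ (l - d)) := by
    apply hroot.pow (pow_pos hp.pos _)
    rw [← pow_add]; congr 1; omega
  refine ⟨_, AddChar.zmodChar_primitive_of_primitive_root _ hroot', ?_⟩
  rw [PS_prime_pow_eq p l d hp (by omega) ψ hψ v hv hvl]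
  unfold PS
  rw [← sum_range_mul_zmod (p ^ (l - d)) (p ^ (d - 1))]
  have : p ^ (l - d) * p ^ (d - 1) = p ^ (l - 1) := by
    rw [← pow_add]; congr 1; omega
  rw [this]
  refine Finset.sum_congr rfl fun z _ => ?_
  rw [← Nat.cast_pow (α := ZMod (p ^ (l - d))), AddChar.zmodChar_apply', ← pow_mul, ← AddChar.map_nsmul_eq_pow]
  simp

lemma PS_prime_pow_small (p l d : ℕ) (hp : p.Prime) (hdl : l ≤ d) [NeZero (p ^ l)]
    (ψ : AddChar (ZMod (p ^ l)) ℂ) (hψ : ψ.IsPrimitive) (v : ℕ) (hv : ¬ p ^ (v + 1) ∣ d)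
    (hvl : 2 * v + 2 ≤ l) :
    PS d ψ = (p ^ (l - 1) : ℕ) := by
  rw [PS_prime_pow_eq p l d hp (by omega) ψ hψ v hv hvl]
  have : (p : ZMod (p ^ l)) ^ d = 0 := by
    rw [← Nat.cast_pow, ZMod.natCast_eq_zero_iff]
    exact pow_dvd_pow _ hdl
  simp [this]


lemma card_pow_eq_le {F : Type*} [Field F] [Fintype F] [DecidableEq F] (d : ℕ) (hd : 1 ≤ d)
    (a : F) : (Finset.univ.filter fun x : F => x ^ d = a).card ≤ d := by
  have h : (Finset.univ.filter fun x : F => x ^ d = a) ⊆ (Polynomial.nthRoots d a).toFinset := by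
    intro x hx
    rw [Multiset.mem_toFinset, Polynomial.mem_nthRoots hd]
    simpa using hx
  exact (Finset.card_le_card h).trans ((Multiset.toFinset_card_le _).trans
    (Polynomial.card_nthRoots d a))

/-- Mean-value bound for a field. -/
lemma norm_PS_field {F : Type*} [Field F] [Fintype F] [DecidableEq F] (d : ℕ) (hd : 1 ≤ d)
    (ψ : AddChar F ℂ) (hψ : ψ.IsPrimitive) :
    ‖PS d ψ‖ ^ 2 ≤ (d : ℝ) ^ 2 * Fintype.card F := by
  set q : ℝ := (Fintype.card F : ℝ) with hq
  have hqpos : 0 < q := by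
    have : 0 < Fintype.card F := Fintype.card_pos
    rw [hq]
    exact_mod_cast this
  let S : F → ℂ := fun b => ∑ x : F, ψ (b * x ^ d)
  have hS1 : ∀ t : F, ‖PS d ψ‖ ≤ ‖S (t ^ d)‖ := by
    intro t
    by_cases ht : t = 0
    · have : S (t ^ d) = Fintype.card F := by
        simp [S, ht, show d ≠ 0 by omega]
      rw [this]
      simpa using norm_PS_le d ψ
    · have : S (t ^ d) = PS d ψ := by
        simp only [S, PS]
        rw [← Equiv.sum_comp (Equiv.mulLeft₀ t ht) (fun x => ψ (x ^ d))]
        simp [mul_pow]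
      rw [this]
  have hmean : ∑ b : F, ‖S b‖ ^ 2 ≤ q * (q * d) := by
    have hc : ((∑ b : F, ‖S b‖ ^ 2 : ℝ) : ℂ) =
        ((∑ y : F, ∑ x : F, (if x ^ d = y ^ d then q else 0) : ℝ) : ℂ) := by
      push_cast
      calc ∑ b : F, ((‖S b‖ : ℂ)) ^ 2
          = ∑ b : F, ∑ y : F, ∑ x : F, ψ (b * (x ^ d - y ^ d)) := by
            refine Finset.sum_congr rfl fun b _ => ?_
            rw [← Complex.conj_mul']
            simp only [S, map_sum]
            rw [Finset.sum_mul_sum]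
            refine Finset.sum_congr rfl fun y _ => Finset.sum_congr rfl fun x _ => ?_
            rw [← AddChar.map_neg_eq_conj, ← AddChar.map_add_eq_mul]
            congr 1; ring
        _ = ∑ y : F, ∑ x : F, ∑ b : F, ψ (b * (x ^ d - y ^ d)) := by
            rw [Finset.sum_comm]
            refine Finset.sum_congr rfl fun y _ => Finset.sum_comm
        _ = _ := by
            refine Finset.sum_congr rfl fun y _ => Finset.sum_congr rfl fun x _ => ?_
            rw [AddChar.sum_mulShift _ hψ]
            simp only [sub_eq_zero]
            split_ifs <;> simp [hq]
    have hr := Complex.ofReal_injective hc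
    rw [hr]
    calc ∑ y : F, ∑ x : F, (if x ^ d = y ^ d then q else 0) ≤ ∑ y : F, q * d := by
          refine Finset.sum_le_sum fun y _ => ?_
          rw [← Finset.sum_filter, Finset.sum_const, nsmul_eq_mul, mul_comm]
          have := card_pow_eq_le d hd (y ^ d)
          gcongr
      _ = q * (q * d) := by simp [hq]
  have hfib : ∑ t : F, ‖S (t ^ d)‖ ^ 2 ≤ d * ∑ b : F, ‖S b‖ ^ 2 := by
    rw [← Finset.sum_fiberwise (s := Finset.univ) (g := fun t : F => t ^ d), Finset.mul_sum]
    refine Finset.sum_le_sum fun b _ => ?_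
    rw [Finset.sum_congr rfl (g := fun _ => ‖S b‖ ^ 2)]
    · rw [Finset.sum_const, nsmul_eq_mul]
      have := card_pow_eq_le d hd b
      gcongr
    · intro t ht
      rw [(Finset.mem_filter.1 ht).2]
  have hlow : q * ‖PS d ψ‖ ^ 2 ≤ ∑ t : F, ‖S (t ^ d)‖ ^ 2 := by
    calc q * ‖PS d ψ‖ ^ 2 = ∑ t : F, ‖PS d ψ‖ ^ 2 := by simp [hq]
      _ ≤ _ := Finset.sum_le_sum fun t _ => by
        have := hS1 t
        gcongr
  have : q * ‖PS d ψ‖ ^ 2 ≤ q * ((d : ℝ) ^ 2 * q) := by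
    calc q * ‖PS d ψ‖ ^ 2 ≤ d * ∑ b : F, ‖S b‖ ^ 2 := hlow.trans hfib
      _ ≤ d * (q * (q * d)) := by gcongr
      _ = _ := by ring
  exact le_of_mul_le_mul_left this hqpos

/-- The quadratic case. -/
lemma norm_PS_two {F : Type*} [Field F] [Fintype F] [DecidableEq F] (h2 : (2 : F) ≠ 0)
    (ψ : AddChar F ℂ) (hψ : ψ.IsPrimitive) :
    ‖PS 2 ψ‖ ^ 2 = Fintype.card F := by
  have hc : ((‖PS 2 ψ‖ ^ 2 : ℝ) : ℂ) = ((Fintype.card F : ℝ) : ℂ) := by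
    push_cast
    rw [← Complex.conj_mul']
    unfold PS
    rw [map_sum, Finset.sum_mul_sum]
    calc ∑ y : F, ∑ x : F, (starRingEnd ℂ) (ψ (y ^ 2)) * ψ (x ^ 2)
        = ∑ y : F, ∑ h : F, ψ (h ^ 2) * ψ (y * (2 * h)) := by
          refine Finset.sum_congr rfl fun y _ => ?_
          rw [← Equiv.sum_comp (Equiv.addRight y)]
          refine Finset.sum_congr rfl fun h _ => ?_
          rw [← AddChar.map_neg_eq_conj, ← AddChar.map_add_eq_mul, ← AddChar.map_add_eq_mul]
          congr 1
          simp only [Equiv.coe_addRight]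
          ring
      _ = ∑ h : F, ψ (h ^ 2) * ∑ y : F, ψ (y * (2 * h)) := by
          rw [Finset.sum_comm]
          simp only [Finset.mul_sum]
      _ = ∑ h : F, (if h = 0 then (Fintype.card F : ℂ) else 0) := by
          refine Finset.sum_congr rfl fun h _ => ?_
          rw [AddChar.sum_mulShift _ hψ]
          by_cases hh : h = 0
          · simp [hh]
          · simp [hh, h2]
      _ = _ := by simp
  exact Complex.ofReal_injective hc

lemma PS_one {F : Type*} [Field F] [Fintype F] [DecidableEq F]
    (ψ : AddChar F ℂ) (hψ : ψ.IsPrimitive) : PS 1 ψ = 0 := by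
  have := AddChar.sum_mulShift (1 : F) hψ
  unfold PS
  simpa using this

/-- Bound at large primes. -/
lemma norm_PS_prime (p d : ℕ) (hp : p.Prime) (hd : 1 ≤ d) (hpd : d ^ 6 < p) [NeZero p]
    (ψ : AddChar (ZMod p) ℂ) (hψ : ψ.IsPrimitive) :
    ‖PS d ψ‖ ≤ (p : ℝ) ^ (1 - (1 : ℝ) / d) := by
  have : Fact p.Prime := ⟨hp⟩
  have hp1 : (1 : ℝ) ≤ p := by exact_mod_cast hp.one_le
  have hp0 : (0 : ℝ) ≤ p := by linarith
  rcases Nat.lt_or_ge d 3 with h3 | h3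
  · have : d = 1 ∨ d = 2 := by omega
    rcases this with rfl | rfl
    · rw [PS_one ψ hψ, norm_zero]; positivity
    · have h := norm_PS_two (F := ZMod p) (by
        intro h
        have h' : ((2 : ℕ) : ZMod p) = 0 := by exact_mod_cast h
        rw [ZMod.natCast_eq_zero_iff] at h'
        have := Nat.le_of_dvd (by norm_num) h'
        omega) ψ hψ
      have e : (1 - (1 : ℝ) / (2 : ℕ)) = 1 / 2 := by norm_num
      rw [e, ← Real.sqrt_eq_rpow]
      apply Real.le_sqrt_of_sq_le
      have hcard : Fintype.card (ZMod p) = p := ZMod.card p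
      rw [hcard] at h
      exact h.le
  · have h := norm_PS_field (F := ZMod p) d hd ψ hψ
    have hcard : Fintype.card (ZMod p) = p := ZMod.card p
    rw [hcard] at h
    have hd6 : (d : ℝ) ≤ (p : ℝ) ^ ((1 : ℝ) / 6) := by
      have : (d : ℝ) ^ 6 ≤ p := by exact_mod_cast hpd.le
      calc (d : ℝ) = ((d : ℝ) ^ (6 : ℕ)) ^ ((1 : ℝ) / 6) := by
            rw [← Real.rpow_natCast, ← Real.rpow_mul (by positivity)]
            norm_num
        _ ≤ _ := Real.rpow_le_rpow (by positivity) this (by norm_num)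
    have h4 : ‖PS d ψ‖ ≤ d * (p : ℝ) ^ ((1 : ℝ) / 2) := by
      apply (pow_le_pow_iff_left₀ (norm_nonneg _) (by positivity) two_ne_zero).1
      rw [mul_pow, ← Real.sqrt_eq_rpow, Real.sq_sqrt hp0]
      exact h
    have hdr : (3 : ℝ) ≤ d := by exact_mod_cast h3
    calc ‖PS d ψ‖ ≤ d * (p : ℝ) ^ ((1 : ℝ) / 2) := h4
      _ ≤ (p : ℝ) ^ ((1 : ℝ) / 6) * (p : ℝ) ^ ((1 : ℝ) / 2) := by gcongr
      _ = (p : ℝ) ^ ((2 : ℝ) / 3) := by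
          rw [← Real.rpow_add (by linarith)]; norm_num
      _ ≤ _ := by
          apply Real.rpow_le_rpow_of_exponent_le hp1
          have : (1 : ℝ) / d ≤ 1 / 3 := one_div_le_one_div_of_le (by norm_num) hdr
          linarith

/-- Uniform statement: `B d q K` says every primitive character sum mod `q` is
bounded by `K q^{1-1/d}`. -/
def B (d q : ℕ) (K : ℝ) : Prop := ∀ [NeZero q] (ψ : AddChar (ZMod q) ℂ), ψ.IsPrimitive →
  ‖PS d ψ‖ ≤ K * (q : ℝ) ^ (1 - (1 : ℝ) / d)

lemma B_prime_pow (p d : ℕ) (hp : p.Prime) (hd : 1 ≤ d) (v : ℕ) (hv : ¬ p ^ (v + 1) ∣ d)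
    (K : ℝ) (hK : 1 ≤ K) (h : ∀ l, l ≤ 2 * v + 1 → B d (p ^ l) K) (l : ℕ) : B d (p ^ l) K := by
  have hp1 : (1 : ℝ) ≤ p := by exact_mod_cast hp.one_le
  have hp0 : (0 : ℝ) < p := by linarith
  have hd0 : (0 : ℝ) < d := by exact_mod_cast hd
  induction l using Nat.strong_induction_on with
  | _ l ih =>
    intro _ ψ hψ
    by_cases hl : l ≤ 2 * v + 1
    · exact h l hl ψ hψ
    · by_cases hdl : d < l
      · have : NeZero (p ^ (l - d)) := ⟨(pow_pos hp.pos _).ne'⟩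
        obtain ⟨ψ', hψ', he⟩ := PS_prime_pow_rec p l d hp hd hdl ψ hψ v hv (by omega)
        have hb := ih (l - d) (by omega) ψ' hψ'
        rw [he, norm_mul, Complex.norm_natCast]
        calc ((p ^ (d - 1) : ℕ) : ℝ) * ‖PS d ψ'‖
            ≤ ((p ^ (d - 1) : ℕ) : ℝ) * (K * ((p ^ (l - d) : ℕ) : ℝ) ^ (1 - (1 : ℝ) / d)) := by
              gcongr
          _ = K * ((p : ℝ) ^ ((d : ℝ) - 1) * (p : ℝ) ^ (((l : ℝ) - d) * (1 - 1 / d))) := by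
              push_cast
              rw [← Real.rpow_natCast p (d - 1), ← Real.rpow_natCast p (l - d),
                ← Real.rpow_mul hp0.le, Nat.cast_sub hd, Nat.cast_sub hdl.le]
              push_cast
              ring
          _ = K * ((p ^ l : ℕ) : ℝ) ^ (1 - (1 : ℝ) / d) := by
              rw [← Real.rpow_add hp0]
              push_cast
              rw [← Real.rpow_natCast p l, ← Real.rpow_mul hp0.le]
              congr 2
              field_simp
              ring
      · rw [PS_prime_pow_small p l d hp (by omega) ψ hψ v hv (by omega), Complex.norm_natCast]
        have hl1 : 1 ≤ l := by omega
        have hld : (l : ℝ) ≤ d := by exact_mod_cast (by omega : l ≤ d)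
        calc ((p ^ (l - 1) : ℕ) : ℝ) = (p : ℝ) ^ ((l : ℝ) - 1) := by
              push_cast
              rw [← Real.rpow_natCast p (l - 1), Nat.cast_sub hl1, Nat.cast_one]
          _ ≤ (p : ℝ) ^ ((l : ℝ) * (1 - 1 / d)) := by
              apply Real.rpow_le_rpow_of_exponent_le hp1
              have : (l : ℝ) / d ≤ 1 := (div_le_one hd0).2 hld
              have e : (l : ℝ) * (1 - 1 / d) = l - l / d := by ring
              linarith
          _ = 1 * ((p ^ l : ℕ) : ℝ) ^ (1 - (1 : ℝ) / d) := by
              push_cast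
              rw [← Real.rpow_natCast p l, ← Real.rpow_mul hp0.le, one_mul]
          _ ≤ _ := by gcongr

lemma B_trivial (d q : ℕ) (hd : 1 ≤ d) (hq : 0 < q) (K : ℝ) (hK : (q : ℝ) ≤ K) : B d q K := by
  intro _ ψ _
  have h := norm_PS_le d ψ
  rw [ZMod.card] at h
  have hq1 : (1 : ℝ) ≤ q := by exact_mod_cast hq
  have hd1 : (1 : ℝ) ≤ d := by exact_mod_cast hd
  have : (1 : ℝ) ≤ (q : ℝ) ^ (1 - (1 : ℝ) / d) := by
    apply Real.one_le_rpow hq1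
    have : (1 : ℝ) / d ≤ 1 := by rw [div_le_one (by linarith)]; exact hd1
    linarith
  nlinarith

/-- Local constants. -/
noncomputable def Kp (d p : ℕ) : ℝ := if p ≤ d ^ 6 then (max p 1 : ℝ) ^ (2 * d + 1) else 1

lemma one_le_Kp (d p : ℕ) : 1 ≤ Kp d p := by
  unfold Kp
  split_ifs
  · exact one_le_pow₀ (le_max_right _ _)
  · exact le_rfl

lemma B_Kp (p d : ℕ) (hp : p.Prime) (hd : 1 ≤ d) (l : ℕ) : B d (p ^ l) (Kp d p) := by
  by_cases hpd : p ≤ d ^ 6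
  · refine B_prime_pow p d hp hd d ?_ _ (one_le_Kp d p) ?_ l
    · intro h
      have h1 := Nat.le_of_dvd hd h
      have h2 : d + 1 < p ^ (d + 1) := Nat.lt_pow_self hp.one_lt
      omega
    · intro l hl
      apply B_trivial d _ hd (pow_pos hp.pos _)
      have hp1 : (1 : ℝ) ≤ p := by exact_mod_cast hp.one_le
      rw [Kp, if_pos hpd, max_eq_left hp1]
      push_cast
      exact pow_le_pow_right₀ hp1 hl
  · refine B_prime_pow p d hp hd 0 ?_ _ (one_le_Kp d p) ?_ l
    · intro h
      have h1 := Nat.le_of_dvd hd h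
      have : d ≤ d ^ 6 := Nat.le_self_pow (by norm_num) d
      rw [zero_add, pow_one] at h1
      omega
    · intro l hl
      rcases (by omega : l = 0 ∨ l = 1) with rfl | rfl
      · apply B_trivial d _ hd (pow_pos hp.pos _)
        simpa using one_le_Kp d p
      · rw [pow_one, Kp, if_neg hpd]
        intro _ ψ hψ
        rw [one_mul]
        exact norm_PS_prime p d hp hd (by omega) ψ hψ

lemma B_prod (d : ℕ) (hd : 1 ≤ d) (q : ℕ) : 0 < q → B d q (∏ p ∈ q.primeFactors, Kp d p) := by
  induction q using Nat.recOnPosPrimePosCoprime with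
  | prime_pow p n hp hn =>
    intro _
    rw [Nat.primeFactors_prime_pow hn.ne' hp, Finset.prod_singleton]
    exact B_Kp p d hp hd n
  | zero => intro h; omega
  | one => intro _; exact B_trivial d 1 hd one_pos _ (by simp)
  | coprime a b ha hb hab iha ihb =>
    intro _
    have : NeZero a := ⟨by omega⟩
    have : NeZero b := ⟨by omega⟩
    intro _ ψ hψ
    obtain ⟨ψ₁, ψ₂, h1, h2, he⟩ := PS_mul hab d ψ hψ
    have i1 := iha (by omega) ψ₁ h1
    have i2 := ihb (by omega) ψ₂ h2
    rw [he, norm_mul, hab.primeFactors_mul, Finset.prod_union hab.disjoint_primeFactors]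
    refine (mul_le_mul i1 i2 (norm_nonneg _) ((norm_nonneg _).trans i1)).trans (le_of_eq ?_)
    push_cast
    rw [Real.mul_rpow (by positivity) (by positivity)]
    ring

/-- The Hardy-Littlewood constant. -/
noncomputable def CHL (d : ℕ) : ℝ := ∏ p ∈ range (d ^ 6 + 1), Kp d p

lemma CHL_pos (d : ℕ) : 0 < CHL d :=
  Finset.prod_pos fun p _ => lt_of_lt_of_le one_pos (one_le_Kp d p)

lemma B_CHL (d : ℕ) (hd : 1 ≤ d) (q : ℕ) (hq : 0 < q) : B d q (CHL d) := by
  intro _ ψ hψ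
  refine (B_prod d hd q hq ψ hψ).trans ?_
  gcongr
  unfold CHL
  calc ∏ p ∈ q.primeFactors, Kp d p
      = ∏ p ∈ q.primeFactors.filter (fun p => p ≤ d ^ 6), Kp d p := by
        symm
        apply Finset.prod_filter_of_ne
        intro p _ h
        by_contra h'
        exact h (by rw [Kp, if_neg h'])
    _ ≤ _ := by
        apply Finset.prod_le_prod_of_subset_of_one_le
        · intro p hp
          simp only [Finset.mem_filter, Finset.mem_range] at hp ⊢
          omega
        · intro p _
          linarith [one_le_Kp d p]
        · intro p _ _
          exact one_le_Kp d p


/-- Inner sum. -/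
lemma inner_bound (d : ℕ) (hd : 1 ≤ d) (q : ℕ) (hq : 0 < q) (a : ℤ) (ha : Int.gcd a q = 1)
    (Y : ℕ) :
    ‖∑ t ∈ Icc 1 q, eTwoPi ((a : ℝ) * ((t : ℝ) * Y) ^ d / q)‖ ≤
      CHL d * (q : ℝ) ^ (1 - (1 : ℝ) / d) * (Nat.gcd q Y : ℕ) := by
  set g : ℕ := Nat.gcd q (Y ^ d) with hg
  have hgpos : 0 < g := Nat.gcd_pos_of_pos_left _ hq
  obtain ⟨r, hr⟩ : g ∣ q := Nat.gcd_dvd_left _ _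
  obtain ⟨y, hy⟩ : g ∣ Y ^ d := Nat.gcd_dvd_right _ _
  have hrpos : 0 < r := by
    rcases Nat.eq_zero_or_pos r with h | h
    · subst h; omega
    · exact h
  have : NeZero r := ⟨hrpos.ne'⟩
  have hry : Nat.Coprime r y := by
    have h : Nat.gcd (g * r) (g * y) = g := by rw [← hr, ← hy]
    rw [Nat.gcd_mul_left] at h
    exact Nat.eq_of_mul_eq_mul_left hgpos (by rw [h, mul_one])
  have hau : IsUnit ((a : ZMod r) * (y : ZMod r)) := by
    apply IsUnit.mul
    · rw [ZMod.coe_int_isUnit_iff_isCoprime]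
      have h1 : IsCoprime a (q : ℤ) := Int.isCoprime_iff_gcd_eq_one.2 ha
      rw [hr, Nat.cast_mul] at h1
      exact (IsCoprime.of_mul_right_right h1).symm
    · rw [ZMod.isUnit_iff_coprime]; exact hry.symm
  let ψ : AddChar (ZMod r) ℂ :=
    AddChar.mulShift (ZMod.stdAddChar (N := r)) ((a : ZMod r) * (y : ZMod r))
  have hψ : ψ.IsPrimitive := by
    apply AddChar.zmod_char_primitive_of_eq_one_only_at_zero
    intro x hx
    rw [AddChar.mulShift_apply, (ZMod.isPrimitive_stdAddChar r).zmod_char_eq_one_iff] at hx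
    exact hau.mul_right_eq_zero.1 hx
  have hterm : ∀ t : ℕ, eTwoPi ((a : ℝ) * ((t : ℝ) * Y) ^ d / q) = ψ ((t : ZMod r) ^ d) := by
    intro t
    have : ψ ((t : ZMod r) ^ d) = ZMod.stdAddChar (N := r) ((a * y * (t : ℤ) ^ d : ℤ) : ZMod r) := by
      rw [AddChar.mulShift_apply]; push_cast; rfl
    rw [this, ZMod.stdAddChar_coe, eTwoPi]
    congr 1
    have hY : (Y : ℂ) ^ d = g * y := by exact_mod_cast hy
    have hQ : (q : ℂ) = g * r := by exact_mod_cast hr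
    have hg0 : (g : ℂ) ≠ 0 := by exact_mod_cast hgpos.ne'
    have hr0 : (r : ℂ) ≠ 0 := by exact_mod_cast hrpos.ne'
    push_cast
    rw [mul_pow, hY, hQ]
    field_simp
  have hsum : ∑ t ∈ Icc 1 q, eTwoPi ((a : ℝ) * ((t : ℝ) * Y) ^ d / q) = g * PS d ψ := by
    simp only [hterm]
    have h1 : ∑ t ∈ Icc 1 q, ψ ((t : ZMod r) ^ d) = ∑ t ∈ range q, ψ ((t : ZMod r) ^ d) := by
      have hq0 : ((q : ℕ) : ZMod r) = 0 := by rw [hr]; simp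
      have e : Icc 1 q = Ico 1 (q + 1) := by ext x; simp
      rw [e, Finset.sum_Ico_eq_sum_range, Nat.add_sub_cancel]
      have h2 := Finset.sum_range_succ' (fun t => ψ ((t : ZMod r) ^ d)) q
      have h3 := Finset.sum_range_succ (fun t => ψ ((t : ZMod r) ^ d)) q
      rw [h2] at h3
      simp only [hq0, Nat.cast_zero, add_left_inj] at h3
      rw [← h3]
      refine Finset.sum_congr rfl fun t _ => ?_
      rw [add_comm]
    rw [h1]
    have := sum_range_mul_zmod r g (fun x => ψ (x ^ d))
    rw [mul_comm r g, ← hr] at this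
    exact this
  rw [hsum, norm_mul, Complex.norm_natCast]
  have hB := B_CHL d hd r hrpos ψ hψ
  have hgr : (0 : ℝ) < g := by exact_mod_cast hgpos
  have hrr : (0 : ℝ) < r := by exact_mod_cast hrpos
  have hd0 : (0 : ℝ) < d := by exact_mod_cast hd
  have hgle : (g : ℝ) ^ ((1 : ℝ) / d) ≤ (Nat.gcd q Y : ℕ) := by
    have h1 : g ≤ (Nat.gcd q Y) ^ d := by
      apply Nat.le_of_dvd (pow_pos (Nat.gcd_pos_of_pos_left _ hq) _)
      exact gcd_pow_right_dvd_pow_gcd (a := q) (b := Y) (k := d)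
    have h2 : (g : ℝ) ≤ ((Nat.gcd q Y : ℕ) : ℝ) ^ d := by exact_mod_cast h1
    calc (g : ℝ) ^ ((1 : ℝ) / d) ≤ (((Nat.gcd q Y : ℕ) : ℝ) ^ d) ^ ((1 : ℝ) / d) :=
          Real.rpow_le_rpow hgr.le h2 (by positivity)
      _ = _ := by
          rw [← Real.rpow_natCast, ← Real.rpow_mul (by positivity), mul_one_div_cancel hd0.ne',
            Real.rpow_one]
  have hC := CHL_pos d
  calc (g : ℝ) * ‖PS d ψ‖ ≤ g * (CHL d * (r : ℝ) ^ (1 - (1 : ℝ) / d)) := by gcongr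
    _ = CHL d * (q : ℝ) ^ (1 - (1 : ℝ) / d) * (g : ℝ) ^ ((1 : ℝ) / d) := by
        have e1 : (q : ℝ) = g * r := by exact_mod_cast hr
        rw [e1, Real.mul_rpow hgr.le hrr.le]
        have e2 : (g : ℝ) ^ (1 - (1 : ℝ) / d) * (g : ℝ) ^ ((1 : ℝ) / d) = g := by
          rw [← Real.rpow_add hgr]; simp
        linear_combination (-(CHL d * (r : ℝ) ^ (1 - (1 : ℝ) / d))) * e2
    _ ≤ _ := by gcongr

lemma sum_gcd_le (q : ℕ) : ∑ t ∈ Icc 1 q, Nat.gcd q t ≤ q * q.divisors.card := by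
  rcases Nat.eq_zero_or_pos q with rfl | hq
  · simp
  calc ∑ t ∈ Icc 1 q, Nat.gcd q t
      ≤ ∑ t ∈ Icc 1 q, ∑ g ∈ q.divisors, (if g ∣ t then g else 0) := by
        refine Finset.sum_le_sum fun t _ => ?_
        have := Finset.single_le_sum (f := fun g => if g ∣ t then g else 0)
          (fun i _ => Nat.zero_le _) (Nat.mem_divisors.2 ⟨Nat.gcd_dvd_left q t, hq.ne'⟩)
        simpa [Nat.gcd_dvd_right] using this
    _ = ∑ g ∈ q.divisors, ∑ t ∈ Icc 1 q, (if g ∣ t then g else 0) := Finset.sum_comm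
    _ = ∑ g ∈ q.divisors, q := by
        refine Finset.sum_congr rfl fun g hg => ?_
        rw [← Finset.sum_filter, Finset.sum_const, smul_eq_mul]
        have : ((Icc 1 q).filter fun t => g ∣ t).card = q / g := by
          have := Nat.Ioc_filter_dvd_card_eq_div q g
          rw [← this]
          congr 1
        rw [this]
        exact Nat.div_mul_cancel (Nat.dvd_of_mem_divisors hg)
    _ = _ := by rw [Finset.sum_const, smul_eq_mul, mul_comm]

lemma gcd_prod_le (q : ℕ) (hq : 0 < q) {n : ℕ} (y : Fin n → ℕ) :
    Nat.gcd q (∏ i, y i) ≤ ∏ i, Nat.gcd q (y i) := by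
  apply Nat.le_of_dvd (Finset.prod_pos fun i _ => Nat.gcd_pos_of_pos_left _ hq)
  induction n with
  | zero => simp
  | succ n ih =>
    rw [Fin.prod_univ_succ, Fin.prod_univ_succ]
    exact (Nat.gcd_mul_right_dvd_mul_gcd q _ _).trans (Nat.mul_dvd_mul_left _ (ih _))

lemma sum_piFinset_succ (n q : ℕ) (f : (Fin (n + 1) → ℕ) → ℂ) :
    ∑ x ∈ Fintype.piFinset (fun _ : Fin (n + 1) => Icc 1 q), f x =
      ∑ y ∈ Fintype.piFinset (fun _ : Fin n => Icc 1 q), ∑ t ∈ Icc 1 q,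
        f (Fin.cons (α := fun _ => ℕ) t y) := by
  rw [← Finset.sum_product']
  refine Finset.sum_nbij' (fun x => (Fin.tail x, x 0))
    (fun z => Fin.cons (α := fun _ => ℕ) z.2 z.1) ?_ ?_ ?_ ?_ ?_
  · intro x hx
    rw [Fintype.mem_piFinset] at hx
    rw [Finset.mem_product, Fintype.mem_piFinset]
    exact ⟨fun i => hx i.succ, hx 0⟩
  · intro z hz
    rw [Finset.mem_product, Fintype.mem_piFinset] at hz
    rw [Fintype.mem_piFinset]
    intro i
    refine Fin.cases ?_ (fun j => ?_) i
    · simpa using hz.2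
    · simpa using hz.1 j
  · intro x _; simp
  · intro z _; simp
  · intro x _; simp

end HLW

/-- For `(a,q)=1`, `|q^{-k} S_k(q,a)| ≤ C(d,k) τ(q)^{k-1} q^{-1/d}`. -/
theorem stmt_8 (d k : ℕ) (hd : 1 ≤ d) (hk : 1 ≤ k) :
    ∃ C : ℝ, 0 < C ∧ ∀ (q : ℕ), 0 < q → ∀ a : ℤ, Int.gcd a q = 1 →
      ‖(q : ℂ) ^ (-(k : ℤ)) * SWeyl d k q a‖ ≤
        C * (q.divisors.card : ℝ) ^ (k - 1) * (q : ℝ) ^ (-(1 : ℝ) / d) := by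
  refine ⟨HLW.CHL d, HLW.CHL_pos d, ?_⟩
  intro q hq a ha
  obtain ⟨n, rfl⟩ : ∃ n, k = n + 1 := ⟨k - 1, by omega⟩
  have hC := HLW.CHL_pos d
  have hqr : (0 : ℝ) < q := by exact_mod_cast hq
  set E : ℝ := (q : ℝ) ^ (1 - (1 : ℝ) / d) with hE
  have hE0 : 0 ≤ E := by positivity
  have hmain : ‖SWeyl d (n + 1) q a‖ ≤ HLW.CHL d * E * ((q : ℝ) * q.divisors.card) ^ n := by
    unfold SWeyl
    rw [HLW.sum_piFinset_succ]
    refine (norm_sum_le _ _).trans ?_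
    calc ∑ y ∈ Fintype.piFinset (fun _ : Fin n => Finset.Icc 1 q),
          ‖∑ t ∈ Finset.Icc 1 q, eTwoPi ((a : ℝ) *
            (∏ i, ((Fin.cons (α := fun _ => ℕ) t y : Fin (n + 1) → ℕ) i : ℝ)) ^ d / q)‖
        ≤ ∑ y ∈ Fintype.piFinset (fun _ : Fin n => Finset.Icc 1 q),
          HLW.CHL d * E * ∏ i, (Nat.gcd q (y i) : ℝ) := by
          refine Finset.sum_le_sum fun y _ => ?_
          have h := HLW.inner_bound d hd q hq a ha (∏ i, y i)
          have h2 : ((Nat.gcd q (∏ i, y i) : ℕ) : ℝ) ≤ ∏ i, (Nat.gcd q (y i) : ℝ) := by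
            exact_mod_cast HLW.gcd_prod_le q hq y
          simp only [Fin.prod_univ_succ, Fin.cons_zero, Fin.cons_succ]
          push_cast at h
          refine h.trans ?_
          gcongr
      _ = HLW.CHL d * E * (∑ t ∈ Finset.Icc 1 q, (Nat.gcd q t : ℝ)) ^ n := by
          rw [← Finset.mul_sum,
            Finset.sum_prod_piFinset (Finset.Icc 1 q) (fun _ t => (Nat.gcd q t : ℝ))]
          simp
      _ ≤ _ := by
          have : ∑ t ∈ Finset.Icc 1 q, (Nat.gcd q t : ℝ) ≤ (q : ℝ) * q.divisors.card := by
            exact_mod_cast HLW.sum_gcd_le q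
          gcongr
  rw [norm_mul, norm_zpow, Complex.norm_natCast, Nat.add_sub_cancel]
  calc (q : ℝ) ^ (-((n + 1 : ℕ) : ℤ)) * ‖SWeyl d (n + 1) q a‖
      ≤ (q : ℝ) ^ (-((n + 1 : ℕ) : ℤ)) *
        (HLW.CHL d * E * ((q : ℝ) * q.divisors.card) ^ n) := by gcongr
    _ = _ := by
      have e : E = q * (q : ℝ) ^ (-(1 : ℝ) / d) := by
        rw [hE, sub_eq_add_neg, Real.rpow_add hqr, Real.rpow_one, neg_div]
      rw [e, zpow_neg, zpow_natCast, mul_pow, pow_succ]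
      field_simp
end
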